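/- Fix integers m ≥ 1, d ≥ 2 and ν ≥ 1 and a matrix S as below. There exists a constant c > 0 depending only on d, m and ν such that the following holds. Let p be a prime, 𝓕 ∈ 𝔉(S,m) over F_p a system of total degree d with s_{0,1}·s_{1,2}⋯s_{m−1,m} ≠ 0, and let {w_n} = {(u_{n,0},…,u_{n,m})} be the sequence generated by iterating 𝓕 (the same system at each step) from some initial vector, assumed purely periodic with period τ. Then for every positive integer N ≤ τ and every vector a = (a_0,…,a_{m−1}) ∈ F_p^m with a ≠ 0, |S_a(N)| ≤ c·N^{1−β}·p^{α}, where α = (m² + mν + m)/(2ν(m+ν)) and β = 1/(2ν). -/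

import Mathlib

open MvPolynomial

/-- Membership of a polynomial system `F = (F_0, …, F_m)` over `R` in the class `𝔉(S,m)`,
where `s i j` records the entries of the upper triangular matrix `S` (for `i < j`). -/
def IsFSystem {R : Type*} [CommRing R] (m : ℕ) (s : ℕ → ℕ → ℕ)
    (F : Fin (m + 1) → MvPolynomial (Fin (m + 1)) R) : Prop :=
  (∃ g h : R, g ≠ 0 ∧
      F (Fin.last m) = MvPolynomial.C g * MvPolynomial.X (Fin.last m) + MvPolynomial.C h) ∧
  ∀ i : Fin (m + 1), (i : ℕ) < m →
    ∃ (G H Gt : MvPolynomial (Fin (m + 1)) R) (g : R),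
      g ≠ 0 ∧
      F i = MvPolynomial.X i * G + H ∧
      (∀ d ∈ G.support, ∀ j : Fin (m + 1), j ≤ i → d j = 0) ∧
      (∀ d ∈ H.support, ∀ j : Fin (m + 1), j ≤ i → d j = 0) ∧
      G = MvPolynomial.C g *
          (∏ j ∈ Finset.univ.filter (fun j : Fin (m + 1) => i < j),
            MvPolynomial.X j ^ s i.val j.val) + Gt ∧
      (∀ d ∈ Gt.support, ∀ j : Fin (m + 1), i < j → d j < s i.val j.val) ∧
      (∀ d ∈ H.support, ∀ j : Fin (m + 1), i < j → d j ≤ s i.val j.val)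

/-- The iterated polynomials `F_i^{(k)}` of a sequence of polynomial systems:
`F_i^{(0)} = X_i` and `F_i^{(k)} = F_{k,i}(F_0^{(k-1)}, …, F_m^{(k-1)})`. -/
noncomputable def iterSys {R : Type*} [CommRing R] (m : ℕ)
    (Fs : ℕ → Fin (m + 1) → MvPolynomial (Fin (m + 1)) R) :
    ℕ → Fin (m + 1) → MvPolynomial (Fin (m + 1)) R
  | 0 => fun i => MvPolynomial.X i
  | k + 1 => fun i => MvPolynomial.bind₁ (iterSys m Fs k) (Fs (k + 1) i)

/-- The additive character `e_p(z) = exp(2πiz/p)` evaluated at an element of `F_p`. -/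
noncomputable def eP (p : ℕ) (x : ZMod p) : ℂ :=
  Complex.exp (2 * Real.pi * Complex.I * (x.val : ℂ) / (p : ℂ))

/-- `e_M(z) = exp(2πiz/M)` for a natural number `z`. -/
noncomputable def eM (M z : ℕ) : ℂ :=
  Complex.exp (2 * Real.pi * Complex.I * (z : ℂ) / (M : ℂ))

/-- The discrepancy of the first `N` points of a sequence in `[0,1)^s`: the supremum over
boxes `B = [a_1,b_1) × ⋯ × [a_s,b_s) ⊆ [0,1)^s` of `|T(B)/N - vol B|`. -/
noncomputable def discrepancy (s N : ℕ) (P : ℕ → Fin s → ℝ) : ℝ :=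
  sSup {D : ℝ | ∃ a b : Fin s → ℝ,
    (∀ j, 0 ≤ a j ∧ a j ≤ b j ∧ b j ≤ 1) ∧
    D = |(((Finset.range N).filter fun n => ∀ j, a j ≤ P n j ∧ P n j < b j).card : ℝ) / N -
        ∏ j, (b j - a j)|}

theorem totalDegree_bind_le' {R σ : Type*} [CommRing R] [Fintype σ]
    (f : σ → MvPolynomial σ R) (Q : MvPolynomial σ R) (B : ℕ)
    (h : ∀ e ∈ Q.support, ∑ j, e j * (f j).totalDegree ≤ B) :
    (bind₁ f Q).totalDegree ≤ B := by
  rw [bind₁, aeval_def, eval₂_eq']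
  apply totalDegree_finsetSum_le
  intro e he
  refine (totalDegree_mul _ _).trans ?_
  rw [algebraMap_eq, totalDegree_C, zero_add]
  refine (totalDegree_finsetProd _ _).trans (le_trans ?_ (h e he))
  exact Finset.sum_le_sum fun j _ => totalDegree_pow _ _

theorem degreeOf_bind_le' {R σ : Type*} [CommRing R] [Fintype σ]
    (f : σ → MvPolynomial σ R) (Q : MvPolynomial σ R) (n : σ) (B : ℕ)
    (h : ∀ e ∈ Q.support, ∑ j, e j * (f j).degreeOf n ≤ B) :
    (bind₁ f Q).degreeOf n ≤ B := by
  rw [bind₁, aeval_def, eval₂_eq']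
  refine (degreeOf_sum_le _ _ _).trans (Finset.sup_le ?_)
  intro e he
  rw [algebraMap_eq]
  refine (degreeOf_C_mul_le _ _ _).trans ?_
  refine (degreeOf_prod_le _ _ _).trans (le_trans ?_ (h e he))
  exact Finset.sum_le_sum fun j _ => degreeOf_pow_le _ _ _

/-- A triangular decomposition of the system. -/
structure TriDec {R : Type*} [Field R] (m : ℕ) (sv : Fin (m + 1) → ℕ)
    (F G H : Fin (m + 1) → MvPolynomial (Fin (m + 1)) R) : Prop where
  hF : ∀ i, F i = X i * G i + H i
  hG : ∀ i, ∀ e ∈ (G i).support, ∀ j, j ≤ i → e j = 0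
  hH : ∀ i, ∀ e ∈ (H i).support, ∀ j, j ≤ i → e j = 0
  hlast : ∃ g : R, g ≠ 0 ∧ G (Fin.last m) = C g
  lead : ∀ i k : Fin (m + 1), (k : ℕ) = i + 1 → 0 < sv i ∧
    ∃ (g : R) (r : Fin (m + 1) → ℕ) (Gt : MvPolynomial (Fin (m + 1)) R), g ≠ 0 ∧
      r k = sv i ∧
      G i = C g * (∏ j ∈ Finset.univ.filter (fun j => i < j), X j ^ r j) + Gt ∧
      (∀ e ∈ Gt.support, ∀ j, j ≤ i → e j = 0) ∧
      (∀ e ∈ Gt.support, e k < sv i)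

theorem triDec_of_isFSystem {R : Type*} [Field R] {m : ℕ} {s : ℕ → ℕ → ℕ}
    {F : Fin (m + 1) → MvPolynomial (Fin (m + 1)) R} (h : IsFSystem m s F)
    (hs : (∏ i ∈ Finset.range m, s i (i + 1)) ≠ 0) :
    ∃ (G H : Fin (m + 1) → MvPolynomial (Fin (m + 1)) R),
      TriDec m (fun i => s i.val (i.val + 1)) F G H := by
  classical
  obtain ⟨⟨gl, hl, hgl, hFl⟩, h2⟩ := h
  have hC : ∀ c : R, ∀ e ∈ (C c : MvPolynomial (Fin (m + 1)) R).support, ∀ j, e j = 0 := by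
    intro c e he j
    rw [mem_support_iff, coeff_C] at he
    have : e = 0 := by
      by_contra hne
      exact he (if_neg (Ne.symm hne))
    simp [this]
  have key : ∀ i : Fin (m + 1), ∃ G H : MvPolynomial (Fin (m + 1)) R,
      F i = X i * G + H ∧ (∀ e ∈ G.support, ∀ j, j ≤ i → e j = 0) ∧
      (∀ e ∈ H.support, ∀ j, j ≤ i → e j = 0) ∧
      (i = Fin.last m → ∃ g : R, g ≠ 0 ∧ G = C g) ∧
      (∀ k : Fin (m + 1), (k : ℕ) = i + 1 → 0 < s i.val (i.val + 1) ∧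
        ∃ (g : R) (r : Fin (m + 1) → ℕ) (Gt : MvPolynomial (Fin (m + 1)) R), g ≠ 0 ∧
      r k = s i.val (i.val + 1) ∧
      G = C g * (∏ j ∈ Finset.univ.filter (fun j => i < j), X j ^ r j) + Gt ∧
      (∀ e ∈ Gt.support, ∀ j, j ≤ i → e j = 0) ∧
      (∀ e ∈ Gt.support, e k < s i.val (i.val + 1))) := by
    intro i
    by_cases hi : (i : ℕ) < m
    · obtain ⟨G, H, Gt, g, hg, hFi, hG, hH, hGe, hGt, -⟩ := h2 i hi
      refine ⟨G, H, hFi, hG, hH, ?_, ?_⟩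
      · rintro rfl; simp at hi
      · intro k hk
        refine ⟨?_, g, fun j => s i.val j.val, Gt, hg, by simp [hk], hGe, ?_, ?_⟩
        · rw [Finset.prod_ne_zero_iff] at hs
          exact Nat.pos_of_ne_zero (hs i (Finset.mem_range.2 hi))
        · intro e he j hj
          have hGte : Gt = G - C g * (∏ j ∈ Finset.univ.filter (fun j : Fin (m + 1) => i < j),
            X j ^ s i.val j.val) := by rw [hGe]; ring
          have hd : Gt.degreeOf j ≤ 0 := by
            rw [hGte]
            refine (degreeOf_sub_le _ _ _).trans (max_le ?_ ?_)
            · rw [degreeOf_le_iff]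
              intro e he
              rw [hG e he j hj]
            · refine (degreeOf_C_mul_le _ _ _).trans ((degreeOf_prod_le _ _ _).trans ?_)
              rw [Nat.le_zero, Finset.sum_eq_zero_iff]
              intro l hl
              rw [Finset.mem_filter] at hl
              exact degreeOf_X_pow_of_ne _ (ne_of_lt (lt_of_le_of_lt hj hl.2))
          exact Nat.le_zero.1 (degreeOf_le_iff.1 hd e he)
        · intro e he
          have := hGt e he k (by rw [Fin.lt_def]; omega)
          rwa [hk] at this
    · have hi' : i = Fin.last m := by
        apply Fin.ext; simp; omega
      subst hi'
      refine ⟨C gl, C hl, by rw [hFl]; ring, fun e he j _ => hC _ e he j,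
        fun e he j _ => hC _ e he j, fun _ => ⟨gl, hgl, rfl⟩, ?_⟩
      intro k hk
      have := k.isLt
      simp at hk; omega
  choose G H h1 h2 h3 h4 h5 using key
  exact ⟨G, H, h1, h2, h3, h4 _ rfl, h5⟩

section
variable {R : Type*} [Field R] {m : ℕ} {sv : Fin (m + 1) → ℕ}
    {F G H : Fin (m + 1) → MvPolynomial (Fin (m + 1)) R}

theorem iter_succ' (D : TriDec m sv F G H) (k : ℕ) (i : Fin (m + 1)) :
    iterSys m (fun _ => F) (k + 1) i =
      iterSys m (fun _ => F) k i * bind₁ (iterSys m (fun _ => F) k) (G i)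
        + bind₁ (iterSys m (fun _ => F) k) (H i) := by
  simp [iterSys, D.hF i]

theorem degOf_bind_zero (f : Fin (m + 1) → MvPolynomial (Fin (m + 1)) R)
    (Q : MvPolynomial (Fin (m + 1)) R) (i j : Fin (m + 1))
    (hQ : ∀ e ∈ Q.support, ∀ l, l ≤ i → e l = 0)
    (hf : ∀ l, i < l → (f l).degreeOf j = 0) :
    (bind₁ f Q).degreeOf j = 0 := by
  rw [← Nat.le_zero]
  apply degreeOf_bind_le'
  intro e he
  rw [Nat.le_zero, Finset.sum_eq_zero_iff]
  intro l _
  rcases le_or_gt l i with hl | hl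
  · rw [hQ e he l hl, zero_mul]
  · rw [hf l hl, mul_zero]

theorem iter_deg_below (D : TriDec m sv F G H) (k : ℕ) :
    ∀ i j : Fin (m + 1), j < i → (iterSys m (fun _ => F) k i).degreeOf j = 0 := by
  induction k with
  | zero =>
    intro i j hj
    exact degreeOf_X_of_ne (ne_of_lt hj)
  | succ k ih =>
    intro i j hj
    rw [iter_succ' D, ← Nat.le_zero]
    refine (degreeOf_add_le _ _ _).trans (max_le ?_ ?_)
    · refine (degreeOf_mul_le _ _ _).trans ?_
      rw [ih i j hj, degOf_bind_zero _ _ i j (D.hG i) (fun l hl => ih l j (hj.trans hl))]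
    · rw [degOf_bind_zero _ _ i j (D.hH i) (fun l hl => ih l j (hj.trans hl))]

theorem ne_zero_of_degOf {Q : MvPolynomial (Fin (m + 1)) R} {j : Fin (m + 1)}
    (h : 0 < Q.degreeOf j) : Q ≠ 0 := by
  rintro rfl; simp at h

theorem stepA (D : TriDec m sv F G H) (i : Fin (m + 1))
    (hne : ∀ k, bind₁ (iterSys m (fun _ => F) k) (G i) ≠ 0) (k : ℕ) :
    (iterSys m (fun _ => F) k i).degreeOf i = 1 := by
  induction k with
  | zero => exact degreeOf_X_self i
  | succ k ih =>
    rw [iter_succ' D]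
    have h1 : (iterSys m (fun _ => F) k i * bind₁ (iterSys m (fun _ => F) k) (G i)).degreeOf i
        = 1 := by
      rw [degreeOf_mul_eq (ne_zero_of_degOf (j := i) (by omega)) (hne k), ih,
        degOf_bind_zero _ _ i i (D.hG i) (fun l hl => iter_deg_below D k l i hl)]
    rw [degreeOf_add_eq_of_degreeOf_lt, h1]
    rw [h1, degOf_bind_zero _ _ i i (D.hH i) (fun l hl => iter_deg_below D k l i hl)]
    exact one_pos

theorem stepC (D : TriDec m sv F G H) (i n : Fin (m + 1)) (hn : (n : ℕ) = i + 1) (k : ℕ)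
    (hA : ∀ j, i < j → (iterSys m (fun _ => F) k j).degreeOf j = 1) :
    (bind₁ (iterSys m (fun _ => F) k) (G i)).degreeOf n = sv i := by
  obtain ⟨hpos, g, r, Gt, hg, hr, hGe, hGt0, hGtn⟩ := D.lead i n hn
  have hin : i < n := by rw [Fin.lt_def]; omega
  have hdeg : ∀ j, i < j → (iterSys m (fun _ => F) k j).degreeOf n = if j = n then 1 else 0 := by
    intro j hj
    split_ifs with hjn
    · subst hjn; exact hA _ hj
    · apply iter_deg_below D
      rw [Fin.lt_def] at hj ⊢
      have : (j : ℕ) ≠ n := fun h => hjn (Fin.ext h)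
      omega
  have hlead : (C g * ∏ j ∈ Finset.univ.filter (fun j => i < j),
      iterSys m (fun _ => F) k j ^ r j).degreeOf n = sv i := by
    rw [degreeOf_C_mul _ _ (mem_nonZeroDivisors_of_ne_zero hg), degreeOf_prod_eq]
    · rw [Finset.sum_eq_single n]
      · rw [degreeOf_pow_eq _ _ _ (ne_zero_of_degOf (j := n) (by rw [hA n hin]; exact one_pos)),
          hA n hin, hr, mul_one]
      · intro j hj hjn
        rw [Finset.mem_filter] at hj
        rw [degreeOf_pow_eq _ _ _ (ne_zero_of_degOf (j := j) (by rw [hA j hj.2]; exact one_pos)),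
          hdeg j hj.2, if_neg hjn, mul_zero]
      · intro h
        exact absurd (Finset.mem_filter.2 ⟨Finset.mem_univ _, hin⟩) h
    · intro j hj
      rw [Finset.mem_filter] at hj
      exact pow_ne_zero _ (ne_zero_of_degOf (j := j) (by rw [hA j hj.2]; exact one_pos))
  have hrest : (bind₁ (iterSys m (fun _ => F) k) Gt).degreeOf n < sv i := by
    refine lt_of_le_of_lt (b := sv i - 1) ?_ (by omega)
    apply degreeOf_bind_le'
    intro e he
    rw [Finset.sum_eq_single n]
    · rw [hA n hin, mul_one]
      have := hGtn e he
      omega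
    · intro j _ hjn
      rcases le_or_gt j i with hj | hj
      · rw [hGt0 e he j hj, zero_mul]
      · rw [hdeg j hj, if_neg hjn, mul_zero]
    · intro h; exact absurd (Finset.mem_univ _) h
  rw [hGe]
  simp only [map_add, map_mul, map_prod, map_pow, bind₁_C_right, bind₁_X_right]
  rw [degreeOf_add_eq_of_degreeOf_lt, hlead]
  rw [hlead]; exact hrest

theorem stepAll (D : TriDec m sv F G H) : ∀ r : ℕ, ∀ i : Fin (m + 1), (i : ℕ) + r = m →
    ∀ k, (iterSys m (fun _ => F) k i).degreeOf i = 1 := by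
  intro r
  induction r using Nat.strong_induction_on with
  | _ r ih =>
    intro i hi
    apply stepA D
    intro k
    rcases Nat.eq_zero_or_pos r with hr | hr
    · have : i = Fin.last m := by apply Fin.ext; simp; omega
      obtain ⟨g, hg, hGl⟩ := D.hlast
      rw [this, hGl, bind₁_C_right]
      simpa using hg
    · have hlt : (i : ℕ) + 1 < m + 1 := by omega
      have h := stepC D i ⟨i + 1, hlt⟩ rfl k (fun j hj => by
        rw [Fin.lt_def] at hj
        have := j.isLt
        exact ih (m - j) (by omega) j (by omega) k)
      apply ne_zero_of_degOf (j := ⟨i + 1, hlt⟩)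
      rw [h]
      exact (D.lead i ⟨i + 1, hlt⟩ rfl).1

theorem degOf_bindG (D : TriDec m sv F G H) (i n : Fin (m + 1)) (hn : (n : ℕ) = i + 1) (k : ℕ) :
    (bind₁ (iterSys m (fun _ => F) k) (G i)).degreeOf n = sv i :=
  stepC D i n hn k (fun j _ => stepAll D (m - j) j (by have := j.isLt; omega) k)

/-- The coefficient of `X i` in the iterate. -/
noncomputable def Gk (F G : Fin (m + 1) → MvPolynomial (Fin (m + 1)) R)
    (i : Fin (m + 1)) (k : ℕ) : MvPolynomial (Fin (m + 1)) R :=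
  ∏ t ∈ Finset.range k, bind₁ (iterSys m (fun _ => F) t) (G i)

theorem degOf_Gk (D : TriDec m sv F G H) (i n : Fin (m + 1)) (hn : (n : ℕ) = i + 1) (k : ℕ) :
    (Gk F G i k).degreeOf n = k * sv i := by
  have hpos := (D.lead i n hn).1
  rw [Gk, degreeOf_prod_eq]
  · simp [degOf_bindG D i n hn]
  · intro t _
    apply ne_zero_of_degOf (j := n)
    rw [degOf_bindG D i n hn]; exact hpos

theorem Gk_ne_zero (D : TriDec m sv F G H) (i n : Fin (m + 1)) (hn : (n : ℕ) = i + 1) (k : ℕ) :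
    Gk F G i k ≠ 0 := by
  have hpos := (D.lead i n hn).1
  rw [Gk, Finset.prod_ne_zero_iff]
  intro t _
  apply ne_zero_of_degOf (j := n)
  rw [degOf_bindG D i n hn]; exact hpos

/-- Linear independence of the coefficients. -/
theorem Gk_indep (D : TriDec m sv F G H) (i n : Fin (m + 1)) (hn : (n : ℕ) = i + 1)
    (K : ℕ) (c : ℕ → R) (h : ∑ k ∈ Finset.range K, C (c k) * Gk F G i k = 0) :
    ∀ k < K, c k = 0 := by
  have hpos := (D.lead i n hn).1
  induction K with
  | zero => intro k hk; omega
  | succ K ih =>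
    have hK : c K = 0 := by
      by_contra hc
      rw [Finset.sum_range_succ] at h
      have h1 : (C (c K) * Gk F G i K).degreeOf n = K * sv i := by
        rw [degreeOf_C_mul _ _ (mem_nonZeroDivisors_of_ne_zero hc), degOf_Gk D i n hn]
      rcases Nat.eq_zero_or_pos K with h0 | h0
      · subst h0
        simp only [Finset.range_zero, Finset.sum_empty, zero_add, mul_eq_zero] at h
        rcases h with h | h
        · exact hc (by simpa using h)
        · exact Gk_ne_zero D i n hn 0 h
      · have h2 : (∑ k ∈ Finset.range K, C (c k) * Gk F G i k).degreeOf n ≤ (K - 1) * sv i := by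
          refine (degreeOf_sum_le _ _ _).trans (Finset.sup_le ?_)
          intro k hk
          rw [Finset.mem_range] at hk
          refine (degreeOf_C_mul_le _ _ _).trans ?_
          rw [degOf_Gk D i n hn]
          exact Nat.mul_le_mul_right _ (by omega)
        have h3 : C (c K) * Gk F G i K = - (∑ k ∈ Finset.range K, C (c k) * Gk F G i k) := by
          linear_combination h
        rw [h3, degreeOf_neg] at h1
        rw [h1] at h2
        have := Nat.le_of_mul_le_mul_right h2 hpos
        omega
    rw [Finset.sum_range_succ, hK] at h
    simp only [map_zero, zero_mul, add_zero] at h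
    intro k hk
    rcases Nat.lt_succ_iff_lt_or_eq.1 hk with h' | h'
    · exact ih h k h'
    · rw [h']; exact hK

/-! Total degree bounds. -/

theorem totalDegree_GH (D : TriDec m sv F G H) (i : Fin (m + 1)) {d : ℕ}
    (hd : (F i).totalDegree ≤ d) : (G i).totalDegree ≤ d ∧ (H i).totalDegree ≤ d := by
  classical
  constructor
  · refine Finset.sup_le fun e he => ?_
    have hmem : Finsupp.single i 1 + e ∈ (F i).support := by
      rw [mem_support_iff, D.hF i, coeff_add, coeff_X_mul]
      have : coeff (Finsupp.single i 1 + e) (H i) = 0 := by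
        by_contra hne
        have := D.hH i _ (mem_support_iff.2 hne) i le_rfl
        simp at this
      rw [this, add_zero]
      exact mem_support_iff.1 he
    have h := (le_totalDegree hmem).trans hd
    rw [Finsupp.sum_fintype _ _ (fun _ => rfl)] at h ⊢
    refine le_trans (Finset.sum_le_sum fun j _ => ?_) h
    simp
  · refine Finset.sup_le fun e he => ?_
    have hmem : e ∈ (F i).support := by
      rw [mem_support_iff, D.hF i, coeff_add, coeff_X_mul', if_neg, zero_add]
      · exact mem_support_iff.1 he
      · simpa using D.hH i e he i le_rfl
    exact (le_totalDegree hmem).trans hd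

theorem totalDegree_bind_mul (f : Fin (m + 1) → MvPolynomial (Fin (m + 1)) R)
    (Q : MvPolynomial (Fin (m + 1)) R) (i : Fin (m + 1)) (d B : ℕ)
    (hd : Q.totalDegree ≤ d)
    (hQ : ∀ e ∈ Q.support, ∀ l, l ≤ i → e l = 0)
    (hf : ∀ l, i < l → (f l).totalDegree ≤ B) :
    (bind₁ f Q).totalDegree ≤ d * B := by
  apply totalDegree_bind_le'
  intro e he
  have h1 : ∑ j, e j ≤ d := by
    refine le_trans ?_ hd
    have := le_totalDegree he
    rwa [Finsupp.sum_fintype _ _ (fun _ => rfl)] at this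
  calc ∑ j, e j * (f j).totalDegree ≤ ∑ j, e j * B := by
        apply Finset.sum_le_sum
        intro l _
        rcases le_or_gt l i with hl | hl
        · rw [hQ e he l hl]; simp
        · exact Nat.mul_le_mul_left _ (hf l hl)
    _ = (∑ j, e j) * B := by rw [Finset.sum_mul]
    _ ≤ d * B := Nat.mul_le_mul_right _ h1

theorem iter_totalDegree (D : TriDec m sv F G H) {d : ℕ} (hd1 : 1 ≤ d)
    (hd : ∀ i, (F i).totalDegree ≤ d) (k : ℕ) :
    ∀ (i : Fin (m + 1)) (r : ℕ), (i : ℕ) + r = m →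
      (iterSys m (fun _ => F) k i).totalDegree ≤ (d * (k + 1)) ^ r := by
  induction k with
  | zero =>
    intro i r _
    simp only [iterSys, totalDegree_X]
    exact Nat.one_le_pow _ _ (by omega)
  | succ k ih =>
    intro i r hr
    rw [iter_succ' D]
    obtain ⟨hGd, hHd⟩ := totalDegree_GH D i (hd i)
    rcases r with _ | r
    · have hno : ∀ l : Fin (m + 1), i < l → False := by
        intro l hl
        rw [Fin.lt_def] at hl
        have := l.isLt
        omega
      have h1 := totalDegree_bind_mul (iterSys m (fun _ => F) k) (G i) i d 0 hGd (D.hG i)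
        (fun l hl => (hno l hl).elim)
      have h2 := totalDegree_bind_mul (iterSys m (fun _ => F) k) (H i) i d 0 hHd (D.hH i)
        (fun l hl => (hno l hl).elim)
      have h3 := ih i 0 hr
      have h4 := totalDegree_mul (iterSys m (fun _ => F) k i)
        (bind₁ (iterSys m (fun _ => F) k) (G i))
      refine (totalDegree_add _ _).trans (max_le ?_ ?_)
      · simp at h1 h3 ⊢; omega
      · simp at h2 ⊢; omega
    · have hB : ∀ l : Fin (m + 1), i < l →
          (iterSys m (fun _ => F) k l).totalDegree ≤ (d * (k + 1)) ^ r := by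
        intro l hl
        rw [Fin.lt_def] at hl
        have := l.isLt
        refine (ih l (m - l) (by omega)).trans ?_
        exact Nat.pow_le_pow_right (Nat.mul_pos hd1 (Nat.succ_pos k)) (by omega)
      have h1 := totalDegree_bind_mul (iterSys m (fun _ => F) k) (G i) i d _ hGd (D.hG i) hB
      have h2 := totalDegree_bind_mul (iterSys m (fun _ => F) k) (H i) i d _ hHd (D.hH i) hB
      have h3 := ih i (r + 1) hr
      have h4 := totalDegree_mul (iterSys m (fun _ => F) k i)
        (bind₁ (iterSys m (fun _ => F) k) (G i))
      have h5 : (d * (k + 1)) ^ (r + 1) + d * (d * (k + 1)) ^ r ≤ (d * (k + 1 + 1)) ^ (r + 1) := by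
        calc (d * (k + 1)) ^ (r + 1) + d * (d * (k + 1)) ^ r
            = (d * (k + 1)) ^ r * (d * (k + 1 + 1)) := by ring
          _ ≤ (d * (k + 1 + 1)) ^ r * (d * (k + 1 + 1)) := by gcongr; omega
          _ = _ := by ring
      refine (totalDegree_add _ _).trans (max_le ?_ ?_)
      · omega
      · omega

theorem Gk_totalDegree (D : TriDec m sv F G H) {d : ℕ} (hd1 : 1 ≤ d)
    (hd : ∀ i, (F i).totalDegree ≤ d) (i : Fin (m + 1)) (hi : (i : ℕ) < m) (k K : ℕ)
    (hk : k ≤ K) :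
    (Gk F G i k).totalDegree ≤ (d * K) ^ m := by
  rcases Nat.eq_zero_or_pos k with h0 | h0
  · subst h0; simp [Gk]
  have hdK : 0 < d * K := Nat.mul_pos hd1 (by omega)
  refine (totalDegree_finsetProd _ _).trans ?_
  have : ∀ t ∈ Finset.range k, (bind₁ (iterSys m (fun _ => F) t) (G i)).totalDegree
      ≤ d * (d * K) ^ (m - 1) := by
    intro t ht
    rw [Finset.mem_range] at ht
    apply totalDegree_bind_mul _ _ i _ _ (totalDegree_GH D i (hd i)).1 (D.hG i)
    intro l hl
    rw [Fin.lt_def] at hl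
    have := l.isLt
    refine (iter_totalDegree D hd1 hd t l (m - l) (by omega)).trans ?_
    calc (d * (t + 1)) ^ (m - l) ≤ (d * K) ^ (m - l) := by gcongr; omega
      _ ≤ (d * K) ^ (m - 1) := Nat.pow_le_pow_right hdK (by omega)
  refine (Finset.sum_le_sum this).trans ?_
  rw [Finset.sum_const, Finset.card_range, smul_eq_mul]
  calc k * (d * (d * K) ^ (m - 1)) ≤ K * (d * (d * K) ^ (m - 1)) := by gcongr
    _ = (d * K) ^ (m - 1 + 1) := by ring
    _ = (d * K) ^ m := by congr 1; omega

/-! Evaluation. -/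

theorem eval_congr' (Q : MvPolynomial (Fin (m + 1)) R) (w w' : Fin (m + 1) → R)
    (h : ∀ j, Q.degreeOf j = 0 ∨ w j = w' j) : eval w Q = eval w' Q := by
  rw [eval_eq', eval_eq']
  refine Finset.sum_congr rfl fun e he => ?_
  congr 1
  refine Finset.prod_congr rfl fun j _ => ?_
  rcases h j with h | h
  · have : e j = 0 := Nat.le_zero.1 (degreeOf_le_iff.1 h.le e he)
    rw [this, pow_zero, pow_zero]
  · rw [h]

theorem eval_shift (Q : MvPolynomial (Fin (m + 1)) R) (w : Fin (m + 1) → R) (i : Fin (m + 1))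
    (t : R) (h : Q.degreeOf i = 0) : eval (w + Pi.single i t) Q = eval w Q := by
  apply eval_congr'
  intro j
  by_cases hj : j = i
  · left; rw [hj, h]
  · right; simp [hj]

theorem eval_iter_shift_above (D : TriDec m sv F G H) (k : ℕ) (i j : Fin (m + 1)) (hij : i < j)
    (w : Fin (m + 1) → R) (t : R) :
    eval (w + Pi.single i t) (iterSys m (fun _ => F) k j) =
      eval w (iterSys m (fun _ => F) k j) :=
  eval_shift _ _ _ _ (iter_deg_below D k j i hij)

theorem eval_iter_shift (D : TriDec m sv F G H) (k : ℕ) (i : Fin (m + 1))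
    (w : Fin (m + 1) → R) (t : R) :
    eval (w + Pi.single i t) (iterSys m (fun _ => F) k i) =
      eval w (iterSys m (fun _ => F) k i) + t * eval w (Gk F G i k) := by
  induction k with
  | zero => simp [iterSys, Gk]
  | succ k ih =>
    rw [iter_succ' D, map_add, map_mul, map_add, map_mul, ih,
      eval_shift _ w i t (degOf_bind_zero _ _ i i (D.hG i) (fun l hl => iter_deg_below D k l i hl)),
      eval_shift _ w i t (degOf_bind_zero _ _ i i (D.hH i) (fun l hl => iter_deg_below D k l i hl)),
      show Gk F G i (k + 1) = Gk F G i k * bind₁ (iterSys m (fun _ => F) k) (G i) from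
        Finset.prod_range_succ _ _, map_mul]
    ring

theorem eval_iter (F : Fin (m + 1) → MvPolynomial (Fin (m + 1)) R)
    (u : ℕ → Fin (m + 1) → R) (hu : ∀ n i, u (n + 1) i = eval (u n) (F i)) (n k : ℕ) :
    ∀ i, u (n + k) i = eval (u n) (iterSys m (fun _ => F) k i) := by
  induction k with
  | zero => intro i; simp [iterSys]
  | succ k ih =>
    intro i
    rw [← add_assoc, hu, show u (n + k) = _ from funext ih]
    simp only [iterSys]
    exact (eval₂Hom_bind₁ (RingHom.id R) _ _ _).symm

end

/-! Exponential sums. -/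

theorem card_zeros_le {p : ℕ} [Fact p.Prime] {m : ℕ}
    (P : MvPolynomial (Fin (m + 1)) (ZMod p)) (hP : P ≠ 0) :
    (Finset.univ.filter fun w : Fin (m + 1) → ZMod p => eval w P = 0).card
      ≤ P.totalDegree * p ^ m := by
  have h := schwartz_zippel_totalDegree hP Finset.univ
  have hp : 0 < (p : ℚ≥0) := by exact_mod_cast (Fact.out : p.Prime).pos
  rw [Fintype.piFinset_univ, Finset.card_univ, ZMod.card, div_le_div_iff₀ (by positivity) hp] at h
  have h' : ((Finset.univ.filter fun w : Fin (m + 1) → ZMod p => eval w P = 0).card : ℚ≥0) * p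
      ≤ (P.totalDegree * p ^ m) * p := by
    refine h.trans (le_of_eq (by ring))
  have := le_of_mul_le_mul_right h' hp
  exact_mod_cast this

theorem sum_add_right' {V : Type*} [AddGroup V] [Fintype V] (f : V → ℂ) (v : V) :
    ∑ w, f (w + v) = ∑ w, f w :=
  Equiv.sum_comp (Equiv.addRight v) f

theorem sum_shift_abs {p : ℕ} [Fact p.Prime] {V : Type*} [AddGroup V] [Fintype V]
    (A Q : V → ZMod p) (v : ZMod p → V)
    (hA : ∀ w t, A (w + v t) = A w + t * Q w) :
    ‖∑ w, (ZMod.stdAddChar (A w) : ℂ)‖ ≤ (Finset.univ.filter fun w => Q w = 0).card := by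
  have hp : (p : ℂ) ≠ 0 := by exact_mod_cast (Fact.out : p.Prime).ne_zero
  have h1 : (p : ℂ) * ∑ w, (ZMod.stdAddChar (A w) : ℂ) =
      p * ∑ w ∈ Finset.univ.filter (fun w => Q w = 0), (ZMod.stdAddChar (A w) : ℂ) := by
    calc (p : ℂ) * ∑ w, (ZMod.stdAddChar (A w) : ℂ)
        = ∑ t : ZMod p, ∑ w, (ZMod.stdAddChar (A w) : ℂ) := by
          rw [Finset.sum_const, Finset.card_univ, ZMod.card, nsmul_eq_mul]
      _ = ∑ t : ZMod p, ∑ w, (ZMod.stdAddChar (A (w + v t)) : ℂ) := by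
          refine Finset.sum_congr rfl fun t _ => ?_
          exact (sum_add_right' (fun w => (ZMod.stdAddChar (A w) : ℂ)) (v t)).symm
      _ = ∑ w, ∑ t : ZMod p, (ZMod.stdAddChar (A (w + v t)) : ℂ) := Finset.sum_comm
      _ = ∑ w, if Q w = 0 then p * (ZMod.stdAddChar (A w) : ℂ) else 0 := by
          refine Finset.sum_congr rfl fun w _ => ?_
          simp_rw [hA, AddChar.map_add_eq_mul]
          rw [← Finset.mul_sum, AddChar.sum_mulShift _ (ZMod.isPrimitive_stdAddChar p)]
          split_ifs
          · rw [ZMod.card, mul_comm]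
          · simp
      _ = _ := by rw [Finset.mul_sum, Finset.sum_filter]
  rw [mul_left_cancel₀ hp h1]
  refine (norm_sum_le _ _).trans ?_
  simp only [AddChar.norm_apply, Finset.sum_const, nsmul_eq_mul, mul_one]
  exact le_rfl

theorem sum_shift_bound {p : ℕ} [Fact p.Prime] {m : ℕ} (i : Fin (m + 1))
    (A : (Fin (m + 1) → ZMod p) → ZMod p) (P : MvPolynomial (Fin (m + 1)) (ZMod p)) (hP : P ≠ 0)
    (a : ZMod p) (ha : a ≠ 0)
    (hA : ∀ w t, A (w + Pi.single i t) = A w + t * (a * eval w P)) :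
    ‖∑ w, (ZMod.stdAddChar (A w) : ℂ)‖ ≤ (P.totalDegree * p ^ m : ℕ) := by
  refine (sum_shift_abs A (fun w => a * eval w P) (fun t => Pi.single i t) hA).trans ?_
  simp only [mul_eq_zero, ha, false_or]
  exact_mod_cast card_zeros_le P hP

theorem char_sum {p : ℕ} [Fact p.Prime] {ι : Type*} (s : Finset ι) (f : ι → ZMod p) :
    (ZMod.stdAddChar (∑ j ∈ s, f j) : ℂ) = ∏ j ∈ s, (ZMod.stdAddChar (f j) : ℂ) := by
  classical
  induction s using Finset.induction_on with
  | empty => simp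
  | insert a s ha ih => rw [Finset.sum_insert ha, Finset.prod_insert ha,
      AddChar.map_add_eq_mul, ih]

theorem norm_pow_expand {p : ℕ} [Fact p.Prime] {K ν : ℕ} (B : Fin K → ZMod p) :
    ((‖∑ k, (ZMod.stdAddChar (B k) : ℂ)‖ ^ (2 * ν) : ℝ) : ℂ) =
      ∑ x : Fin ν → Fin K, ∑ y : Fin ν → Fin K,
        (ZMod.stdAddChar (∑ j, B (x j) - ∑ j, B (y j)) : ℂ) := by
  rw [pow_mul]
  push_cast
  rw [← Complex.mul_conj', mul_pow, map_sum, Fintype.sum_pow, Fintype.sum_pow,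
    Finset.sum_mul_sum]
  refine Finset.sum_congr rfl fun x _ => Finset.sum_congr rfl fun y _ => ?_
  rw [sub_eq_add_neg, AddChar.map_add_eq_mul, char_sum, ← Finset.sum_neg_distrib,
    char_sum]
  congr 1
  refine Finset.prod_congr rfl fun j _ => ?_
  rw [AddChar.map_neg_eq_conj]

/-- All values of `y` are values of `x`. -/
def GoodPair {K ν : ℕ} (x y : Fin ν → Fin K) : Prop := ∀ j, ∃ j', y j = x j'

open Classical in
theorem card_good (K ν : ℕ) :
    (Finset.univ.filter fun xy : (Fin ν → Fin K) × (Fin ν → Fin K) =>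
      GoodPair xy.1 xy.2).card ≤ K ^ ν * ν ^ ν := by
  have hsub : (Finset.univ.filter fun xy : (Fin ν → Fin K) × (Fin ν → Fin K) =>
      GoodPair xy.1 xy.2) ⊆ Finset.univ.image
        (fun q : (Fin ν → Fin K) × (Fin ν → Fin ν) => (q.1, fun j => q.1 (q.2 j))) := by
    rintro ⟨x, y⟩ h
    rw [Finset.mem_filter] at h
    choose σ hσ using h.2
    rw [Finset.mem_image]
    exact ⟨(x, σ), Finset.mem_univ _, Prod.ext rfl (funext fun j => (hσ j).symm)⟩
  refine (Finset.card_le_card hsub).trans (Finset.card_image_le.trans ?_)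
  simp

theorem sum_Gk_eq {p : ℕ} [Fact p.Prime] {m K ν : ℕ}
    (g : ℕ → MvPolynomial (Fin (m + 1)) (ZMod p)) (x : Fin ν → Fin K) :
    ∑ j, g (x j) = ∑ k ∈ Finset.range K,
      C (((Finset.univ.filter fun j => (x j : ℕ) = k).card : ℕ) : ZMod p) * g k := by
  rw [← Finset.sum_fiberwise_of_maps_to (s := Finset.univ) (t := Finset.range K)
    (g := fun j => (x j : ℕ)) (fun j _ => Finset.mem_range.2 (x j).isLt)]
  refine Finset.sum_congr rfl fun k _ => ?_
  rw [Finset.sum_congr rfl (g := fun _ => g k) (by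
    intro j hj
    rw [Finset.mem_filter] at hj
    rw [hj.2])]
  rw [Finset.sum_const, nsmul_eq_mul, map_natCast]

theorem good_of_zero {p : ℕ} [Fact p.Prime] {m : ℕ} {sv : Fin (m + 1) → ℕ}
    {F G H : Fin (m + 1) → MvPolynomial (Fin (m + 1)) (ZMod p)} (D : TriDec m sv F G H)
    {K ν : ℕ} (hν : ν < p) (i n : Fin (m + 1)) (hn : (n : ℕ) = i + 1) (x y : Fin ν → Fin K)
    (h : ∑ j, Gk F G i (x j) - ∑ j, Gk F G i (y j) = 0) : GoodPair x y := by
  rw [sum_Gk_eq (Gk F G i) x, sum_Gk_eq (Gk F G i) y, ← Finset.sum_sub_distrib] at h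
  simp_rw [← sub_mul, ← C_sub] at h
  have h2 := Gk_indep D i n hn K _ h
  intro j
  have h3 := h2 (y j) (y j).isLt
  rw [sub_eq_zero, ZMod.natCast_eq_natCast_iff'] at h3
  have hle : ∀ q : Fin ν → Prop, ∀ _ : DecidablePred q, (Finset.univ.filter q).card < p := by
    intro q _
    refine lt_of_le_of_lt (Finset.card_filter_le _ _) ?_
    simpa using hν
  rw [Nat.mod_eq_of_lt (hle _ _), Nat.mod_eq_of_lt (hle _ _)] at h3
  have h4 : 0 < (Finset.univ.filter fun j' => (y j' : ℕ) = (y j : ℕ)).card :=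
    Finset.card_pos.2 ⟨j, by simp⟩
  rw [← h3] at h4
  obtain ⟨j', hj'⟩ := Finset.card_pos.1 h4
  rw [Finset.mem_filter] at hj'
  exact ⟨j', Fin.ext hj'.2.symm⟩

/-- The linear form of the iterate. -/
noncomputable def Aform {p m : ℕ} (F : Fin (m + 1) → MvPolynomial (Fin (m + 1)) (ZMod p))
    (a : Fin m → ZMod p) (k : ℕ) (w : Fin (m + 1) → ZMod p) : ZMod p :=
  ∑ i : Fin m, a i * eval w (iterSys m (fun _ => F) k i.castSucc)

theorem Aform_shift {p : ℕ} [Fact p.Prime] {m : ℕ} {sv : Fin (m + 1) → ℕ}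
    {F G H : Fin (m + 1) → MvPolynomial (Fin (m + 1)) (ZMod p)} (D : TriDec m sv F G H)
    (a : Fin m → ZMod p) (i : Fin m) (hi : ∀ j, j < i → a j = 0) (k : ℕ)
    (w : Fin (m + 1) → ZMod p) (t : ZMod p) :
    Aform F a k (w + Pi.single i.castSucc t) =
      Aform F a k w + t * (a i * eval w (Gk F G i.castSucc k)) := by
  have h : ∀ j : Fin m, a j * eval (w + Pi.single i.castSucc t)
      (iterSys m (fun _ => F) k j.castSucc) =
      a j * eval w (iterSys m (fun _ => F) k j.castSucc) +
        if j = i then t * (a i * eval w (Gk F G i.castSucc k)) else 0 := by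
    intro j
    rcases lt_trichotomy j i with hj | hj | hj
    · rw [hi j hj, if_neg hj.ne]; ring
    · subst hj
      rw [eval_iter_shift D, if_pos rfl]; ring
    · rw [eval_iter_shift_above D _ _ _ (by simpa using hj), if_neg hj.ne', add_zero]
  unfold Aform
  rw [Finset.sum_congr rfl fun j _ => h j, Finset.sum_add_distrib]
  simp

theorem moment_bound {p : ℕ} [Fact p.Prime] {m : ℕ} {sv : Fin (m + 1) → ℕ}
    {F G H : Fin (m + 1) → MvPolynomial (Fin (m + 1)) (ZMod p)} (D : TriDec m sv F G H)
    {d : ℕ} (hd1 : 1 ≤ d) (hd : ∀ i, (F i).totalDegree ≤ d)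
    {K ν : ℕ} (hν : ν < p)
    (a : Fin m → ZMod p) (i : Fin m) (hai : a i ≠ 0) (hi : ∀ j, j < i → a j = 0) :
    ∑ w : Fin (m + 1) → ZMod p,
      ‖∑ k : Fin K, (ZMod.stdAddChar (Aform F a k w) : ℂ)‖ ^ (2 * ν) ≤
      ((K ^ ν * ν ^ ν) * p ^ (m + 1) + (K ^ ν * K ^ ν) * ((d * K) ^ m * p ^ m) : ℝ) := by
  classical
  have hnn : 0 ≤ ∑ w : Fin (m + 1) → ZMod p,
      ‖∑ k : Fin K, (ZMod.stdAddChar (Aform F a k w) : ℂ)‖ ^ (2 * ν) :=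
    Finset.sum_nonneg fun w _ => by positivity
  rw [← abs_of_nonneg hnn, ← Real.norm_eq_abs, ← Complex.norm_real, Complex.ofReal_sum]
  have e1 : (∑ w : Fin (m + 1) → ZMod p,
      ((‖∑ k : Fin K, (ZMod.stdAddChar (Aform F a k w) : ℂ)‖ ^ (2 * ν) : ℝ) : ℂ)) =
      ∑ xy : (Fin ν → Fin K) × (Fin ν → Fin K), ∑ w : Fin (m + 1) → ZMod p,
        (ZMod.stdAddChar (∑ j, Aform F a (xy.1 j) w - ∑ j, Aform F a (xy.2 j) w) : ℂ) := by
    rw [Finset.sum_comm]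
    refine Finset.sum_congr rfl fun w _ => ?_
    rw [norm_pow_expand (fun k : Fin K => Aform F a k w), Fintype.sum_prod_type]
  rw [e1]
  have hb : ∀ xy : (Fin ν → Fin K) × (Fin ν → Fin K),
      ‖∑ w : Fin (m + 1) → ZMod p,
        (ZMod.stdAddChar (∑ j, Aform F a (xy.1 j) w - ∑ j, Aform F a (xy.2 j) w) : ℂ)‖ ≤
      (if GoodPair xy.1 xy.2 then (p : ℝ) ^ (m + 1) else 0) + (d * K : ℝ) ^ m * p ^ m := by
    rintro ⟨x, y⟩
    split_ifs with hg
    · have : ‖∑ w : Fin (m + 1) → ZMod p,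
        (ZMod.stdAddChar (∑ j, Aform F a (x j) w - ∑ j, Aform F a (y j) w) : ℂ)‖ ≤
          (p : ℝ) ^ (m + 1) := by
        refine (norm_sum_le _ _).trans ?_
        simp [AddChar.norm_apply, ZMod.card]
      have h0 : (0 : ℝ) ≤ (d * K : ℝ) ^ m * p ^ m := by positivity
      exact this.trans (le_add_of_nonneg_right h0)
    · rw [zero_add]
      have hlt : (i : ℕ) + 1 < m + 1 := by have := i.isLt; omega
      have hP : ∑ j, Gk F G i.castSucc (x j) - ∑ j, Gk F G i.castSucc (y j) ≠ 0 := fun h =>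
        hg (good_of_zero D hν i.castSucc ⟨i + 1, hlt⟩ rfl x y h)
      refine (sum_shift_bound i.castSucc
        (fun w => ∑ j, Aform F a (x j) w - ∑ j, Aform F a (y j) w) _ hP (a i) hai ?_).trans ?_
      · intro w t
        simp only [Aform_shift D a i hi, Finset.sum_add_distrib, map_sub, map_sum]
        rw [← Finset.mul_sum, ← Finset.mul_sum, ← Finset.mul_sum, ← Finset.mul_sum]
        ring
      · have hdeg : (∑ j, Gk F G i.castSucc (x j) - ∑ j, Gk F G i.castSucc (y j)).totalDegree
            ≤ (d * K) ^ m := by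
          have : ∀ z : Fin ν → Fin K, (∑ j, Gk F G i.castSucc (z j)).totalDegree
              ≤ (d * K) ^ m := fun z => totalDegree_finsetSum_le fun j _ =>
                Gk_totalDegree D hd1 hd _ (by simp) _ _ (z j).isLt.le
          exact (totalDegree_sub _ _).trans (max_le (this x) (this y))
        exact_mod_cast Nat.mul_le_mul_right _ hdeg
  refine (norm_sum_le _ _).trans ((Finset.sum_le_sum fun xy _ => hb xy).trans ?_)
  rw [Finset.sum_add_distrib, ← Finset.sum_filter, Finset.sum_const, Finset.sum_const,
    nsmul_eq_mul, nsmul_eq_mul]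
  have hc := card_good K ν
  have hc' : ((Finset.univ.filter fun xy : (Fin ν → Fin K) × (Fin ν → Fin K) =>
      GoodPair xy.1 xy.2).card : ℝ) ≤ K ^ ν * ν ^ ν := by exact_mod_cast hc
  refine add_le_add ?_ (le_of_eq ?_)
  · exact mul_le_mul_of_nonneg_right hc' (by positivity)
  · simp

theorem shift_bound (z : ℕ → ℂ) (hz : ∀ n, ‖z n‖ ≤ 1) (N k : ℕ) :
    ‖∑ n ∈ Finset.range N, z n‖ ≤ ‖∑ n ∈ Finset.range N, z (n + k)‖ + 2 * k ∧
    ‖∑ n ∈ Finset.range N, z n - ∑ n ∈ Finset.range N, z (n + k)‖ ≤ 2 * k := by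
  have h : ‖∑ n ∈ Finset.range N, z n - ∑ n ∈ Finset.range N, z (n + k)‖ ≤ 2 * k := by
    induction k with
    | zero => simp
    | succ k ih =>
      have h1 : ∑ n ∈ Finset.range N, z (n + k) - ∑ n ∈ Finset.range N, z (n + (k + 1)) =
          z k - z (N + k) := by
        rw [← Finset.sum_sub_distrib]
        have := Finset.sum_range_sub' (fun n => z (n + k)) N
        simp only [zero_add] at this
        rw [← this]
        refine Finset.sum_congr rfl fun n _ => ?_
        congr 2
        ring
      have h2 : ‖z k - z (N + k)‖ ≤ 2 := by
        have := norm_sub_le (z k) (z (N + k))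
        linarith [hz k, hz (N + k)]
      calc ‖∑ n ∈ Finset.range N, z n - ∑ n ∈ Finset.range N, z (n + (k + 1))‖
          = ‖(∑ n ∈ Finset.range N, z n - ∑ n ∈ Finset.range N, z (n + k)) +
              (∑ n ∈ Finset.range N, z (n + k) - ∑ n ∈ Finset.range N, z (n + (k + 1)))‖ := by
            congr 1; ring
        _ ≤ _ := norm_add_le _ _
        _ ≤ 2 * k + 2 := by rw [h1]; linarith
        _ = 2 * ((k + 1 : ℕ) : ℝ) := by push_cast; ring
  refine ⟨?_, h⟩
  have := norm_sub_norm_le (∑ n ∈ Finset.range N, z n) (∑ n ∈ Finset.range N, z (n + k))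
  linarith

theorem average_bound (z : ℕ → ℂ) (hz : ∀ n, ‖z n‖ ≤ 1) (N K : ℕ) :
    (K : ℝ) * ‖∑ n ∈ Finset.range N, z n‖ ≤
      ∑ n ∈ Finset.range N, ‖∑ k : Fin K, z (n + k)‖ + 2 * (K : ℝ) ^ 2 := by
  have e : (K : ℂ) * ∑ n ∈ Finset.range N, z n =
      ∑ n ∈ Finset.range N, ∑ k : Fin K, z (n + k) +
      ∑ k : Fin K, (∑ n ∈ Finset.range N, z n - ∑ n ∈ Finset.range N, z (n + k)) := by
    rw [Finset.sum_comm, ← Finset.sum_add_distrib]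
    simp
  calc (K : ℝ) * ‖∑ n ∈ Finset.range N, z n‖ = ‖(K : ℂ) * ∑ n ∈ Finset.range N, z n‖ := by
        rw [norm_mul, Complex.norm_natCast]
    _ ≤ _ := by
      rw [e]
      refine (norm_add_le _ _).trans (add_le_add (norm_sum_le _ _) ?_)
      refine (norm_sum_le _ _).trans ?_
      have : ∀ k ∈ (Finset.univ : Finset (Fin K)),
          ‖∑ n ∈ Finset.range N, z n - ∑ n ∈ Finset.range N, z (n + k)‖ ≤ 2 * (K : ℝ) := by
        intro k _
        refine (shift_bound z hz N k).2.trans ?_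
        have : ((k : ℕ) : ℝ) ≤ K := by exact_mod_cast k.isLt.le
        linarith
      refine (Finset.sum_le_sum this).trans (le_of_eq ?_)
      simp; ring

theorem numeric_final (ν : ℕ) (hν : 1 ≤ ν) (N S W K q M PE pm C1 : ℝ)
    (hN : 1 ≤ N) (hS : 0 ≤ S) (hSN : S ≤ N) (hK : 1 ≤ K) (hq2 : q ≤ 2 * K) (hq0 : 0 < q)
    (hM : 0 < M) (hPE : K ≤ PE) (hMpow : M ^ (2 * ν) = N ^ (2 * ν - 1) * PE)
    (hpm : PE * q ^ ν = pm) (hC : 1 ≤ C1) (hW0 : 0 ≤ W)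
    (hSW : K * S ≤ W + 2 * K ^ 2)
    (hW : W ^ (2 * ν) ≤ N ^ (2 * ν - 1) * (C1 * K ^ ν * pm)) :
    S ≤ (4 + 8 * C1) * M := by
  have hν2 : 2 * ν ≠ 0 := by omega
  have hsucc : 2 * ν - 1 + 1 = 2 * ν := by omega
  rcases le_or_gt S M with h | h
  · nlinarith
  have hNP : PE < N := by
    have h1 : M ^ (2 * ν) < N ^ (2 * ν) := pow_lt_pow_left₀ (lt_of_lt_of_le h hSN) hM.le hν2
    rw [hMpow, ← hsucc, pow_succ, hsucc] at h1
    exact lt_of_mul_lt_mul_left h1 (by positivity)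
  have hKM : K ≤ M := by
    apply le_of_pow_le_pow_left₀ hν2 hM.le
    rw [hMpow]
    calc K ^ (2 * ν) = K ^ (2 * ν - 1) * K := by rw [← pow_succ, hsucc]
      _ ≤ N ^ (2 * ν - 1) * PE := by
        gcongr
        linarith
  rcases le_or_gt W (2 * K ^ 2) with hc | hc
  · have : S ≤ 4 * K := by
      have : K * S ≤ K * (4 * K) := by nlinarith
      exact le_of_mul_le_mul_left this (by linarith)
    nlinarith
  · have h2 : K * S ≤ 2 * W := by linarith
    have h3 : S ≤ 8 * C1 * M := by
      apply le_of_pow_le_pow_left₀ hν2 (by positivity)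
      have hKpos : 0 < K := by linarith
      have hPE0 : 0 < PE := by linarith
      have h4 : K ^ (2 * ν) * S ^ (2 * ν) ≤ K ^ (2 * ν) * (8 * C1 * M) ^ (2 * ν) := by
        calc K ^ (2 * ν) * S ^ (2 * ν) = (K * S) ^ (2 * ν) := by rw [mul_pow]
          _ ≤ (2 * W) ^ (2 * ν) := by gcongr
          _ = 2 ^ (2 * ν) * W ^ (2 * ν) := by rw [mul_pow]
          _ ≤ 2 ^ (2 * ν) * (N ^ (2 * ν - 1) * (C1 * K ^ ν * (PE * q ^ ν))) := by
            rw [hpm]; gcongr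
          _ ≤ 2 ^ (2 * ν) * (N ^ (2 * ν - 1) * (C1 * K ^ ν * (PE * (2 * K) ^ ν))) := by
            gcongr
          _ = (2 ^ (2 * ν) * 2 ^ ν) * C1 * K ^ (2 * ν) * (N ^ (2 * ν - 1) * PE) := by
            rw [mul_pow, two_mul ν, pow_add K]; ring
          _ = K ^ (2 * ν) * ((2 ^ (2 * ν) * 2 ^ ν) * C1 * M ^ (2 * ν)) := by rw [← hMpow]; ring
          _ ≤ K ^ (2 * ν) * (8 ^ (2 * ν) * C1 ^ (2 * ν) * M ^ (2 * ν)) := by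
            have h8 : (2 : ℝ) ^ (2 * ν) * 2 ^ ν ≤ 8 ^ (2 * ν) := by
              rw [pow_mul, ← mul_pow, pow_mul]
              gcongr
              norm_num
            have hC2 : C1 ≤ C1 ^ (2 * ν) := le_self_pow₀ hC hν2
            gcongr
          _ = _ := by rw [mul_pow, mul_pow]
      exact le_of_mul_le_mul_left h4 (by positivity)
    nlinarith

theorem orbit_inj {X : Type*} (f : X → X) (u : ℕ → X) (τ : ℕ) (hu : ∀ n, u (n + 1) = f (u n))
    (hper : ∀ n, u (n + τ) = u n)
    (hmin : ∀ t, 0 < t → (∀ n, u (n + t) = u n) → τ ≤ t) :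
    ∀ a b, a < b → b < τ → u a ≠ u b := by
  intro a b hab hb h
  have h1 : ∀ n, u (a + n) = u (b + n) := by
    intro n
    induction n with
    | zero => exact h
    | succ n ih => rw [← add_assoc, ← add_assoc, hu, hu, ih]
  have := hmin (b - a) (by omega) (fun n => by
    rw [← hper (n + (b - a)), ← hper n]
    have := h1 (τ - a + n)
    rw [show a + (τ - a + n) = n + τ by omega, show b + (τ - a + n) = n + (b - a) + τ by omega]
      at this
    exact this.symm)
  omega

theorem eP_eq {p : ℕ} [NeZero p] (x : ZMod p) : eP p x = ZMod.stdAddChar x := by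
  rw [eP, ZMod.stdAddChar_apply, ZMod.toCircle_apply]

theorem core_bound {p : ℕ} [Fact p.Prime] {m : ℕ} {sv : Fin (m + 1) → ℕ}
    {F G H : Fin (m + 1) → MvPolynomial (Fin (m + 1)) (ZMod p)} (D : TriDec m sv F G H)
    {d : ℕ} (hd1 : 1 ≤ d) (hd : ∀ i, (F i).totalDegree ≤ d)
    {K ν : ℕ} (hν1 : 1 ≤ ν) (hν : ν < p) (hKp : K ^ (m + ν) ≤ p)
    (a : Fin m → ZMod p) (ha : a ≠ 0)
    (u : ℕ → Fin (m + 1) → ZMod p) (hu : ∀ n i, u (n + 1) i = eval (u n) (F i))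
    (N : ℕ) (hinj : Set.InjOn u (Finset.range N)) :
    (∑ n ∈ Finset.range N,
      ‖∑ k : Fin K, (ZMod.stdAddChar (∑ i : Fin m, a i * u (n + k) i.castSucc) : ℂ)‖) ^ (2 * ν)
      ≤ (N : ℝ) ^ (2 * ν - 1) * ((ν ^ ν + d ^ m : ℝ) * K ^ ν * p ^ (m + 1)) := by
  classical
  have hex : ∃ i, a i ≠ 0 := by
    by_contra hcon
    push Not at hcon
    exact ha (funext hcon)
  obtain ⟨i, hai, hi⟩ : ∃ i, a i ≠ 0 ∧ ∀ j, j < i → a j = 0 := by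
    have hne : (Finset.univ.filter fun i => a i ≠ 0).Nonempty := by
      obtain ⟨i, hi⟩ := hex
      exact ⟨i, by simp [hi]⟩
    refine ⟨_, (Finset.mem_filter.1 (Finset.min'_mem _ hne)).2, fun j hj => ?_⟩
    by_contra hjn
    exact absurd (Finset.min'_le _ j (by simp [hjn])) (not_le.2 hj)
  have hmom := moment_bound D hd1 hd (K := K) hν a i hai hi
  set f : (Fin (m + 1) → ZMod p) → ℝ := fun w =>
    ‖∑ k : Fin K, (ZMod.stdAddChar (Aform F a k w) : ℂ)‖ with hf
  have hfn : ∀ n, ‖∑ k : Fin K,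
      (ZMod.stdAddChar (∑ i : Fin m, a i * u (n + k) i.castSucc) : ℂ)‖ = f (u n) := by
    intro n
    simp only [hf, Aform]
    simp_rw [eval_iter F u hu n]
  simp_rw [hfn]
  have hsucc : 2 * ν - 1 + 1 = 2 * ν := by omega
  have h1 := pow_sum_le_card_mul_sum_pow (s := Finset.range N) (f := fun n => f (u n))
    (fun n _ => norm_nonneg _) (2 * ν - 1)
  rw [hsucc, Finset.card_range] at h1
  refine h1.trans ?_
  refine mul_le_mul_of_nonneg_left ?_ (by positivity)
  have h2 : ∑ n ∈ Finset.range N, f (u n) ^ (2 * ν) ≤ ∑ w, f w ^ (2 * ν) := by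
    rw [← Finset.sum_image (f := fun w => f w ^ (2 * ν)) hinj]
    apply Finset.sum_le_sum_of_subset_of_nonneg (Finset.subset_univ _)
    intro w _ _
    exact pow_nonneg (norm_nonneg _) _
  refine (h2.trans hmom).trans ?_
  have hKp' : (K : ℝ) ^ (m + ν) ≤ p := by exact_mod_cast hKp
  calc ((K ^ ν * ν ^ ν) * p ^ (m + 1) + (K ^ ν * K ^ ν) * ((d * K) ^ m * p ^ m) : ℝ)
      = (K ^ ν * ν ^ ν) * p ^ (m + 1) + d ^ m * K ^ ν * p ^ m * (K : ℝ) ^ (m + ν) := by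
        rw [mul_pow, pow_add]; ring
    _ ≤ (K ^ ν * ν ^ ν) * p ^ (m + 1) + d ^ m * K ^ ν * p ^ m * p := by gcongr
    _ = _ := by ring

theorem stmt3 (m d ν : ℕ) (hm : 1 ≤ m) (hd : 2 ≤ d) (hν : 1 ≤ ν) :
    ∃ c : ℝ, 0 < c ∧
      ∀ (s : ℕ → ℕ → ℕ) (p : ℕ), p.Prime →
        ∀ F : Fin (m + 1) → MvPolynomial (Fin (m + 1)) (ZMod p),
          IsFSystem m s F →
          (Finset.univ.sup fun i => (F i).totalDegree) = d →
          (∏ i ∈ Finset.range m, s i (i + 1)) ≠ 0 →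
          ∀ (u : ℕ → Fin (m + 1) → ZMod p) (τ : ℕ),
            (∀ n i, u (n + 1) i = MvPolynomial.eval (u n) (F i)) →
            0 < τ → (∀ n, u (n + τ) = u n) →
            (∀ t, 0 < t → (∀ n, u (n + t) = u n) → τ ≤ t) →
            ∀ N : ℕ, 0 < N → N ≤ τ →
              ∀ a : Fin m → ZMod p, a ≠ 0 →
                ‖∑ n ∈ Finset.range N, eP p (∑ i : Fin m, a i * u n i.castSucc)‖ ≤
                  c * (N : ℝ) ^ ((1 : ℝ) - 1 / (2 * (ν : ℝ))) *
                    (p : ℝ) ^ (((m : ℝ) ^ 2 + (m : ℝ) * (ν : ℝ) + (m : ℝ)) /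
                      (2 * (ν : ℝ) * ((m : ℝ) + (ν : ℝ)))) := by
  have hC1 : (1 : ℝ) ≤ (ν : ℝ) ^ ν + (d : ℝ) ^ m := by
    have h1 : (1 : ℝ) ≤ (d : ℝ) ^ m := one_le_pow₀ (by exact_mod_cast (by omega : 1 ≤ d))
    have h2 : (0 : ℝ) ≤ (ν : ℝ) ^ ν := by positivity
    linarith
  refine ⟨(4 + 8 * ((ν : ℝ) ^ ν + (d : ℝ) ^ m)) + (ν : ℝ) ^ (m + 1), by positivity, ?_⟩
  intro s p hp F hF hdeg hs u τ hu hτ hper hmin N hN hNτ a ha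
  have : Fact p.Prime := ⟨hp⟩
  have hν0 : (0 : ℝ) < ν := by exact_mod_cast hν
  have hm0 : (1 : ℝ) ≤ m := by exact_mod_cast hm
  have hN1 : (1 : ℝ) ≤ N := by exact_mod_cast hN
  have hp1 : (1 : ℝ) ≤ p := by exact_mod_cast hp.one_le
  have hN0 : (0 : ℝ) < N := by linarith
  have hp0 : (0 : ℝ) < p := by linarith
  obtain ⟨G, H, D⟩ := triDec_of_isFSystem hF hs
  have hdF : ∀ i, (F i).totalDegree ≤ d := fun i => by
    rw [← hdeg]
    exact Finset.le_sup (f := fun i => (F i).totalDegree) (Finset.mem_univ i)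
  have hdist := orbit_inj (fun w i => eval w (F i)) u τ (fun n => funext (hu n)) hper hmin
  have hinj : Set.InjOn u (Finset.range N) := by
    intro x hx y hy hxy
    simp only [Finset.coe_range, Set.mem_Iio] at hx hy
    by_contra hne
    rcases lt_or_gt_of_ne hne with h | h
    · exact hdist x y h (by omega) hxy
    · exact hdist y x h (by omega) hxy.symm
  have hNcard : N ≤ p ^ (m + 1) := by
    classical
    have h1 := Finset.card_le_univ (Finset.image u (Finset.range N))
    rw [Finset.card_image_of_injOn hinj, Finset.card_range] at h1
    simpa [ZMod.card] using h1
  simp_rw [eP_eq]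
  set z : ℕ → ℂ := fun n => (ZMod.stdAddChar (∑ i : Fin m, a i * u n i.castSucc) : ℂ) with hz
  have hz1 : ∀ n, ‖z n‖ ≤ 1 := fun n => by simp [hz, AddChar.norm_apply]
  set α : ℝ := ((m : ℝ) ^ 2 + (m : ℝ) * (ν : ℝ) + (m : ℝ)) /
                      (2 * (ν : ℝ) * ((m : ℝ) + (ν : ℝ))) with hα
  have hα0 : 0 ≤ α := by positivity
  set M : ℝ := (N : ℝ) ^ ((1 : ℝ) - 1 / (2 * (ν : ℝ))) * (p : ℝ) ^ α with hM
  have hMpos : 0 < M := by positivity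
  rw [mul_assoc, ← hM]
  change ‖∑ n ∈ Finset.range N, z n‖ ≤ _
  have hSN : ‖∑ n ∈ Finset.range N, z n‖ ≤ N := by
    refine (norm_sum_le _ _).trans ((Finset.sum_le_sum fun n _ => hz1 n).trans ?_)
    simp
  have hβ : 0 ≤ (1 : ℝ) - 1 / (2 * (ν : ℝ)) := by
    have : (1 : ℝ) ≤ ν := by exact_mod_cast hν
    rw [sub_nonneg, div_le_one (by positivity)]
    linarith
  have hM1 : 1 ≤ M := one_le_mul_of_one_le_of_one_le (Real.one_le_rpow hN1 hβ)
    (Real.one_le_rpow hp1 hα0)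
  rcases le_or_gt p ν with hpν | hpν
  · have h1 : (N : ℝ) ≤ (ν : ℝ) ^ (m + 1) := by
      exact_mod_cast hNcard.trans (Nat.pow_le_pow_left hpν _)
    calc ‖∑ n ∈ Finset.range N, z n‖ ≤ (ν : ℝ) ^ (m + 1) := hSN.trans h1
      _ ≤ (ν : ℝ) ^ (m + 1) * M := le_mul_of_one_le_right (by positivity) hM1
      _ ≤ _ := by gcongr; linarith
  -- the main case
  have hmν : (0 : ℝ) < (m : ℝ) + ν := by positivity
  set q : ℝ := (p : ℝ) ^ (1 / ((m : ℝ) + ν)) with hq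
  have hq1 : 1 ≤ q := Real.one_le_rpow hp1 (by positivity)
  set K : ℕ := ⌊q⌋₊ with hK
  have hKq : (K : ℝ) ≤ q := Nat.floor_le (by linarith)
  have hK1 : 1 ≤ K := Nat.le_floor (by simpa using hq1)
  have hK1' : (1 : ℝ) ≤ K := by exact_mod_cast hK1
  have hqK : q ≤ 2 * K := by
    have := Nat.lt_floor_add_one q
    rw [← hK] at this
    linarith
  have hqpow : q ^ (m + ν) = p := by
    rw [hq, ← Real.rpow_natCast, ← Real.rpow_mul hp0.le]
    push_cast
    rw [one_div_mul_cancel hmν.ne', Real.rpow_one]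
  have hKp' : (K : ℝ) ^ (m + ν) ≤ p := by
    rw [← hqpow]; gcongr
  have hKp : K ^ (m + ν) ≤ p := by exact_mod_cast hKp'
  have hcore := core_bound D (by omega) hdF hν hpν hKp a ha u hu N hinj
  have hav := average_bound z hz1 N K
  have hfin := numeric_final ν hν N ‖∑ n ∈ Finset.range N, z n‖
    (∑ n ∈ Finset.range N, ‖∑ k : Fin K, z (n + k)‖) K q M
    ((p : ℝ) ^ (2 * ν * α)) ((p : ℝ) ^ (m + 1)) ((ν : ℝ) ^ ν + (d : ℝ) ^ m)
    hN1 (norm_nonneg _) hSN hK1' hqK (by linarith) hMpos ?_ ?_ ?_ hC1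
    (Finset.sum_nonneg fun n _ => norm_nonneg _) hav hcore
  · refine hfin.trans ?_
    have : (0 : ℝ) ≤ (ν : ℝ) ^ (m + 1) := by positivity
    exact mul_le_mul_of_nonneg_right (by linarith) hMpos.le
  · calc (K : ℝ) ≤ (K : ℝ) ^ (m + ν) := le_self_pow₀ hK1' (by omega)
      _ ≤ p := hKp'
      _ = (p : ℝ) ^ (1 : ℝ) := (Real.rpow_one _).symm
      _ ≤ _ := by
        apply Real.rpow_le_rpow_of_exponent_le hp1
        rw [hα]
        have : 2 * (ν : ℝ) * (((m : ℝ) ^ 2 + m * ν + m) / (2 * ν * (m + ν))) =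
            ((m : ℝ) ^ 2 + m * ν + m) / (m + ν) := by
          field_simp
        rw [this, le_div_iff₀ hmν]
        nlinarith
  · rw [hM, mul_pow, ← Real.rpow_natCast, ← Real.rpow_natCast, ← Real.rpow_mul hN0.le,
      ← Real.rpow_mul hp0.le, ← Real.rpow_natCast]
    congr 2
    · rw [Nat.cast_sub (by omega)]
      push_cast
      field_simp
    · push_cast; ring
  · rw [hq, ← Real.rpow_natCast, ← Real.rpow_natCast, ← Real.rpow_mul hp0.le,
      ← Real.rpow_add hp0]
    congr 1
    rw [hα]
    push_cast
    field_simp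
    ring
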